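/- arXiv:math/0605533 — 2 statements merged into one kernel-verified Lean document; each statement's English description precedes it below -/
import Mathlib

section
/- For every unit vector e ∈ ℝ^d, the integral I := ∫_{ℝ^d} (1 − cos(e·x)) |x|^{−d−α} dx is finite, strictly positive, and independent of the unit vector e; moreover ψ(ξ)/|ξ|^α converges to A(d,−α)·I as |ξ| → ∞. -/
open MeasureTheory

/-- The constant `A(d, -α) = α 2^{α-1} π^{-d/2} Γ((d+α)/2) / Γ(1-α/2)`. -/
noncomputable def stableA (d : ℕ) (α : ℝ) : ℝ :=
  α * (2 : ℝ) ^ (α - 1) * Real.pi ^ (-(d : ℝ) / 2) * Real.Gamma (((d : ℝ) + α) / 2) /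
    Real.Gamma (1 - α / 2)

/-- The truncated stable characteristic exponent
`ψ(ξ) = A(d,-α) ∫_{|y|<1} (1 - cos(ξ·y)) |y|^{-d-α} dy`. -/
noncomputable def truncPsi (d : ℕ) (α : ℝ) (ξ : EuclideanSpace ℝ (Fin d)) : ℝ :=
  stableA d α *
    ∫ y in Metric.ball (0 : EuclideanSpace ℝ (Fin d)) 1,
      (1 - Real.cos (inner ℝ ξ y)) * ‖y‖ ^ (-(d : ℝ) - α)

/-!
Near the origin `1 - cos (ξ·x)` is `O(|x|²)`, which compensates the singularity `|x|^{-d-α}` as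
`α < 2`, and at infinity the integrand is at most `2 |x|^{-d-α}`, which is integrable as `0 < α`.
Rotating `ξ` to `|ξ| e` and substituting `x = |ξ| y` turns `ψ(ξ) / |ξ|^α` into the constant
`A(d,-α)` times the integral of `(1 - cos (e·x)) |x|^{-d-α}` over the ball of radius `|ξ|`, and
these balls exhaust the space.
-/

section

open Real Set Metric Filter Module Bornology
open scoped Topology Pointwise

theorem integrableOn_Ioi_min_rpow_one_mul_rpow {α p : ℝ} (hα : 0 < α) (hp : α < p) :
    IntegrableOn (fun r : ℝ => min (r ^ p) 1 * r ^ (-1 - α)) (Ioi 0) := by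
  have near_zero : IntegrableOn (fun r : ℝ => min (r ^ p) 1 * r ^ (-1 - α)) (Ioc 0 1) := by
    have h : IntegrableOn (fun r : ℝ => r ^ (p + (-1 - α))) (Ioc 0 1) := by
      rw [integrableOn_Ioc_iff_integrableOn_Ioo,
        intervalIntegral.integrableOn_Ioo_rpow_iff one_pos]
      linarith
    refine h.congr_fun (fun r hr => ?_) measurableSet_Ioc
    simp only [min_eq_left (rpow_le_one hr.1.le hr.2 (by linarith)), rpow_add hr.1]
  have near_infinity : IntegrableOn (fun r : ℝ => min (r ^ p) 1 * r ^ (-1 - α)) (Ioi 1) := by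
    have h : IntegrableOn (fun r : ℝ => r ^ (-1 - α)) (Ioi 1) :=
      integrableOn_Ioi_rpow_of_lt (by linarith) one_pos
    refine h.congr_fun (fun r hr => ?_) measurableSet_Ioi
    rw [min_eq_right (one_le_rpow (le_of_lt hr) (by linarith)), one_mul]
  rw [← Ioc_union_Ioi_eq_Ioi zero_le_one]
  exact near_zero.union near_infinity

theorem integrable_min_rpow_norm_one_mul_rpow_norm {E : Type*} [NormedAddCommGroup E]
    [NormedSpace ℝ E] [FiniteDimensional ℝ E] [Nontrivial E] [MeasurableSpace E] [BorelSpace E]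
    (μ : Measure E) [μ.IsAddHaarMeasure] {α p : ℝ} (hα : 0 < α) (hp : α < p) :
    Integrable (fun x : E => min (‖x‖ ^ p) 1 * ‖x‖ ^ (-(finrank ℝ E : ℝ) - α)) μ := by
  refine (integrable_fun_norm_addHaar μ
    (f := fun r => min (r ^ p) 1 * r ^ (-(finrank ℝ E : ℝ) - α))).2 ?_
  refine (integrableOn_Ioi_min_rpow_one_mul_rpow hα hp).congr_fun (fun r hr => ?_)
    measurableSet_Ioi
  have radial_exponent :
      r ^ (finrank ℝ E - 1) * r ^ (-(finrank ℝ E : ℝ) - α) = r ^ (-1 - α) := by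
    rw [← rpow_natCast, ← rpow_add hr, Nat.cast_pred finrank_pos]
    ring_nf
  rw [smul_eq_mul, mul_left_comm, radial_exponent]

variable {E : Type*} [NormedAddCommGroup E] [InnerProductSpace ℝ E]

theorem one_sub_cos_inner_le (ξ x : E) :
    1 - cos (inner ℝ ξ x) ≤ (‖ξ‖ ^ 2 + 2) * min (‖x‖ ^ (2 : ℝ)) 1 := by
  have le_const : 1 - cos (inner ℝ ξ x) ≤ 2 := by linarith [neg_one_le_cos (inner ℝ ξ x)]
  have le_sq : 1 - cos (inner ℝ ξ x) ≤ ‖ξ‖ ^ 2 * ‖x‖ ^ 2 := calc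
    1 - cos (inner ℝ ξ x) ≤ inner ℝ ξ x ^ 2 / 2 := by
      linarith [one_sub_sq_div_two_le_cos (x := inner ℝ ξ x)]
    _ ≤ inner ℝ ξ x ^ 2 := half_le_self (sq_nonneg _)
    _ ≤ (‖ξ‖ * ‖x‖) ^ 2 := sq_le_sq.2 <| by
      simpa only [abs_mul, abs_norm] using abs_real_inner_le_norm ξ x
    _ = ‖ξ‖ ^ 2 * ‖x‖ ^ 2 := mul_pow ..
  rw [rpow_two]
  rcases min_choice (‖x‖ ^ 2) 1 with h | h <;> rw [h] <;> nlinarith [sq_nonneg ‖ξ‖, sq_nonneg ‖x‖]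

theorem setIntegral_norm_preimage_comp_inner_norm_congr [FiniteDimensional ℝ E] [MeasurableSpace E]
    [BorelSpace E] {F : Type*} [NormedAddCommGroup F] [NormedSpace ℝ F] (f : ℝ → ℝ → F)
    (t : Set ℝ) {ξ η : E} (h : ‖ξ‖ = ‖η‖) :
    ∫ x : E in norm ⁻¹' t, f (inner ℝ ξ x) ‖x‖ = ∫ x : E in norm ⁻¹' t, f (inner ℝ η x) ‖x‖ := by
  let L : E ≃ₗᵢ[ℝ] E := (ℝ ∙ (η - ξ))ᗮ.reflection
  have map_η : L η = ξ := Submodule.reflection_sub h.symm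
  have preimage_eq : L ⁻¹' (norm ⁻¹' t) = norm ⁻¹' t := by
    ext x
    simp only [mem_preimage, L.norm_map]
  rw [← L.measurePreserving.setIntegral_preimage_emb L.toHomeomorph.measurableEmbedding,
    preimage_eq]
  simp only [← map_η, L.inner_map_map, L.norm_map]

/-- The integrand `(1 - cos (ξ·x)) |x|^{-d-α}`, with `d = dim E`, of the Lévy–Khintchine formula
for the isotropic `α`-stable law, without the normalising constant `A(d,-α)`. -/
noncomputable def stableIntegrand (α : ℝ) (ξ x : E) : ℝ :=
  (1 - cos (inner ℝ ξ x)) * ‖x‖ ^ (-(finrank ℝ E : ℝ) - α)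

theorem stableIntegrand_nonneg (α : ℝ) (ξ x : E) : 0 ≤ stableIntegrand α ξ x :=
  mul_nonneg (sub_nonneg.2 (cos_le_one _)) (rpow_nonneg (norm_nonneg x) _)

theorem stableIntegrand_ne_zero {α : ℝ} {ξ x : E} (h : inner ℝ ξ x ∈ Ioo 0 (2 * π)) :
    stableIntegrand α ξ x ≠ 0 := by
  have x_ne_zero : x ≠ 0 := by
    rintro rfl
    exact h.1.ne' (inner_zero_right ξ)
  have cos_ne_one : cos (inner ℝ ξ x) ≠ 1 := fun hcos =>
    h.1.ne' <| (cos_eq_one_iff_of_lt_of_lt (by linarith [h.1, pi_pos]) h.2).1 hcos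
  exact mul_ne_zero (sub_ne_zero.2 cos_ne_one.symm)
    (rpow_pos_of_pos (norm_pos_iff.2 x_ne_zero) _).ne'

theorem stableIntegrand_smul_left (α : ℝ) {r : ℝ} (hr : 0 < r) (ξ x : E) :
    stableIntegrand α (r • ξ) x = r ^ (finrank ℝ E + α) * stableIntegrand α ξ (r • x) := by
  have rpow_cancel : r ^ (finrank ℝ E + α) * r ^ (-(finrank ℝ E : ℝ) - α) = 1 := by
    rw [← rpow_add hr, ← rpow_zero r]
    ring_nf
  simp only [stableIntegrand, real_inner_smul_left, real_inner_smul_right, norm_smul,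
    norm_of_nonneg hr.le, mul_rpow hr.le (norm_nonneg x)]
  linear_combination
    -((1 - cos (r * inner ℝ ξ x)) * ‖x‖ ^ (-(finrank ℝ E : ℝ) - α)) * rpow_cancel

variable [FiniteDimensional ℝ E] [MeasurableSpace E] [BorelSpace E]

section Haar

variable (μ : Measure E) [μ.IsAddHaarMeasure]

theorem setIntegral_stableIntegrand_smul (α : ℝ) {r : ℝ} (hr : 0 < r) (ξ : E) (s : Set E) :
    ∫ x in s, stableIntegrand α (r • ξ) x ∂μ =
      r ^ α * ∫ x in r • s, stableIntegrand α ξ x ∂μ := by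
  simp only [stableIntegrand_smul_left α hr, integral_const_mul]
  rw [Measure.setIntegral_comp_smul_of_pos μ _ s hr, smul_eq_mul, rpow_add hr, rpow_natCast]
  field_simp

variable [Nontrivial E]

theorem integrable_stableIntegrand {α : ℝ} (hα : 0 < α) (hα2 : α < 2) (ξ : E) :
    Integrable (stableIntegrand α ξ) μ := by
  refine ((integrable_min_rpow_norm_one_mul_rpow_norm μ hα hα2).const_mul (‖ξ‖ ^ 2 + 2)).mono' ?_
    (.of_forall fun x => ?_)
  · unfold stableIntegrand
    exact Measurable.aestronglyMeasurable (by fun_prop)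
  · rw [norm_of_nonneg (stableIntegrand_nonneg α ξ x), ← mul_assoc]
    exact mul_le_mul_of_nonneg_right (one_sub_cos_inner_le ξ x) (rpow_nonneg (norm_nonneg x) _)

theorem integral_stableIntegrand_pos {α : ℝ} (hα : 0 < α) (hα2 : α < 2) {ξ : E} (hξ : ξ ≠ 0) :
    0 < ∫ x, stableIntegrand α ξ x ∂μ := by
  have isOpen_slab : IsOpen {x : E | inner ℝ ξ x ∈ Ioo 0 (2 * π)} :=
    isOpen_Ioo.preimage (by fun_prop)
  have slab_nonempty : {x : E | inner ℝ ξ x ∈ Ioo 0 (2 * π)}.Nonempty := by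
    refine ⟨(π / ‖ξ‖ ^ 2) • ξ, ?_⟩
    have inner_eq_pi : inner ℝ ξ ((π / ‖ξ‖ ^ 2) • ξ) = π := by
      rw [real_inner_smul_right, real_inner_self_eq_norm_sq,
        div_mul_cancel₀ _ (pow_ne_zero 2 (norm_ne_zero_iff.2 hξ))]
    rw [mem_ofPred_eq, inner_eq_pi]
    exact ⟨pi_pos, by linarith [pi_pos]⟩
  rw [integral_pos_iff_support_of_nonneg (stableIntegrand_nonneg α ξ)
    (integrable_stableIntegrand μ hα hα2 ξ)]
  exact (isOpen_slab.measure_pos μ slab_nonempty).trans_le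
    (measure_mono fun _ hx => stableIntegrand_ne_zero hx)

end Haar

theorem setIntegral_norm_preimage_stableIntegrand_congr (α : ℝ) (t : Set ℝ) {ξ η : E}
    (h : ‖ξ‖ = ‖η‖) :
    ∫ x in norm ⁻¹' t, stableIntegrand α ξ x = ∫ x in norm ⁻¹' t, stableIntegrand α η x :=
  setIntegral_norm_preimage_comp_inner_norm_congr
    (fun s r => (1 - cos s) * r ^ (-(finrank ℝ E : ℝ) - α)) t h

theorem integral_stableIntegrand_congr (α : ℝ) {ξ η : E} (h : ‖ξ‖ = ‖η‖) :
    ∫ x, stableIntegrand α ξ x = ∫ x, stableIntegrand α η x := by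
  simpa only [preimage_univ, setIntegral_univ] using
    setIntegral_norm_preimage_stableIntegrand_congr α univ h

theorem setIntegral_ball_stableIntegrand_eq (α R : ℝ) {ξ e : E} (hξ : ξ ≠ 0) (he : ‖e‖ = 1) :
    ∫ x in ball 0 R, stableIntegrand α ξ x =
      ‖ξ‖ ^ α * ∫ x in ball 0 (‖ξ‖ * R), stableIntegrand α e x := by
  have ball_eq : ball (0 : E) R = norm ⁻¹' Iio R := by
    ext x
    exact mem_ball_zero_iff
  have norm_eq : ‖ξ‖ = ‖‖ξ‖ • e‖ := by rw [norm_smul, he, mul_one, norm_norm]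
  calc ∫ x in ball 0 R, stableIntegrand α ξ x
      = ∫ x in ball 0 R, stableIntegrand α (‖ξ‖ • e) x := by
        rw [ball_eq, setIntegral_norm_preimage_stableIntegrand_congr α _ norm_eq]
    _ = ‖ξ‖ ^ α * ∫ x in ‖ξ‖ • ball 0 R, stableIntegrand α e x :=
        setIntegral_stableIntegrand_smul volume α (norm_pos_iff.2 hξ) e _
    _ = ‖ξ‖ ^ α * ∫ x in ball 0 (‖ξ‖ * R), stableIntegrand α e x := by
        rw [_root_.smul_ball (norm_ne_zero_iff.2 hξ), smul_zero, norm_norm]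

variable [Nontrivial E]

theorem tendsto_setIntegral_ball_stableIntegrand_div_rpow {α R : ℝ} (hα : 0 < α) (hα2 : α < 2)
    (hR : 0 < R) {e : E} (he : ‖e‖ = 1) :
    Tendsto (fun ξ : E => (∫ x in ball 0 R, stableIntegrand α ξ x) / ‖ξ‖ ^ α) (cobounded E)
      (𝓝 (∫ x, stableIntegrand α e x)) := by
  have radius_tendsto : Tendsto (fun ξ : E => ‖ξ‖ * R) (cobounded E) atTop :=
    tendsto_norm_cobounded_atTop.atTop_mul_const hR
  have exhaust : Tendsto (fun ξ : E => ∫ x in ball 0 (‖ξ‖ * R), stableIntegrand α e x)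
      (cobounded E) (𝓝 (∫ x, stableIntegrand α e x)) :=
    ((aecover_ball tendsto_id).integral_tendsto_of_countably_generated
      (integrable_stableIntegrand volume hα hα2 e)).comp radius_tendsto
  refine exhaust.congr' ?_
  filter_upwards [eventually_ne_cobounded (0 : E)] with ξ hξ
  rw [setIntegral_ball_stableIntegrand_eq α R hξ he,
    mul_div_cancel_left₀ _ (rpow_pos_of_pos (norm_pos_iff.2 hξ) α).ne']

variable (E) in
theorem statement4_general {α : ℝ} (hα : 0 < α) (hα2 : α < 2) :
    ∃ I : ℝ, 0 < I ∧
      (∀ e : E, ‖e‖ = 1 →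
        Integrable (stableIntegrand α e) ∧ ∫ x, stableIntegrand α e x = I) ∧
      ∀ R > 0, Tendsto (fun ξ : E => (∫ x in ball 0 R, stableIntegrand α ξ x) / ‖ξ‖ ^ α)
        (cobounded E) (𝓝 I) := by
  obtain ⟨e₀, he₀⟩ : ∃ e : E, ‖e‖ = 1 := exists_norm_eq E zero_le_one
  have e₀_ne_zero : e₀ ≠ 0 := norm_ne_zero_iff.1 (he₀ ▸ one_ne_zero)
  exact ⟨∫ x, stableIntegrand α e₀ x, integral_stableIntegrand_pos volume hα hα2 e₀_ne_zero,
    fun e he => ⟨integrable_stableIntegrand volume hα hα2 e,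
      integral_stableIntegrand_congr α (he.trans he₀.symm)⟩,
    fun _ hR => tendsto_setIntegral_ball_stableIntegrand_div_rpow hα hα2 hR he₀⟩

end

/-- for every unit vector `e`, the integral
`I = ∫_{ℝ^d} (1 - cos(e·x)) |x|^{-d-α} dx` is finite, strictly positive and
independent of `e`; moreover `ψ(ξ)/|ξ|^α → A(d,-α)·I` as `|ξ| → ∞`. -/
theorem statement4 (d : ℕ) (hd : 2 ≤ d) (α : ℝ) (hα : 0 < α) (hα2 : α < 2) :
    ∃ I : ℝ, 0 < I ∧
      (∀ e : EuclideanSpace ℝ (Fin d), ‖e‖ = 1 →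
        Integrable (fun x : EuclideanSpace ℝ (Fin d) =>
          (1 - Real.cos (inner ℝ e x)) * ‖x‖ ^ (-(d : ℝ) - α)) volume ∧
        (∫ x : EuclideanSpace ℝ (Fin d),
          (1 - Real.cos (inner ℝ e x)) * ‖x‖ ^ (-(d : ℝ) - α)) = I) ∧
      Filter.Tendsto (fun ξ : EuclideanSpace ℝ (Fin d) => truncPsi d α ξ / ‖ξ‖ ^ α)
        (Filter.comap (fun ξ : EuclideanSpace ℝ (Fin d) => ‖ξ‖) Filter.atTop)
        (nhds (stableA d α * I)) := by
  have : Nonempty (Fin d) := ⟨⟨0, by lia⟩⟩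
  obtain ⟨I, hI, hint, hlim⟩ := statement4_general (EuclideanSpace ℝ (Fin d)) hα hα2
  unfold stableIntegrand at hint hlim
  simp only [finrank_euclideanSpace_fin] at hint hlim
  refine ⟨I, hI, hint, ?_⟩
  simpa only [truncPsi, mul_div_assoc, comap_norm_atTop] using (hlim 1 one_pos).const_mul _
end

section
/- There exist constants c₁, c₂ > 0, depending only on d and α, such that c₁ (1 + |ξ|^α) ≤ 1 + ψ(ξ) ≤ c₂ (1 + |ξ|^α) for every ξ ∈ ℝ^d. -/
/-!
Substituting `z = ‖ξ‖ y` turns the integral over the ball of radius `R` at frequency `ξ` into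
`‖ξ‖ ^ α` times the integral over the ball of radius `R * ‖ξ‖` at the unit frequency `ξ / ‖ξ‖`.
The latter is bounded above by the integral of the radial function
`min 2 (‖z‖ ^ 2 / 2) * ‖z‖ ^ (-d - α)`, which converges at the origin since `α < 2` and at infinity
since `0 < α`. Once `1 ≤ R * ‖ξ‖`, it is bounded below because the unit ball contains a ball of
radius `1 / 4` on which the phase `⟪ξ / ‖ξ‖, z⟫` lies in `[1 / 2, 1]`. When `R * ‖ξ‖ < 1` the
lower bound is trivial, as `‖ξ‖ ^ α` is then bounded.
-/

open MeasureTheory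

open Metric Set Module
open scoped Pointwise

lemma one_sub_cos_le_min (x : ℝ) : 1 - Real.cos x ≤ min 2 (x ^ 2 / 2) :=
  le_min (by linarith [Real.neg_one_le_cos x])
    (by linarith [Real.one_sub_sq_div_two_le_cos (x := x)])

lemma one_sub_cos_half_pos : 0 < 1 - Real.cos (1 / 2) := by
  have hcos : Real.cos (1 / 2) < Real.cos 0 :=
    Real.cos_lt_cos_of_nonneg_of_le_pi le_rfl (by linarith [Real.pi_gt_three]) (by norm_num)
  rwa [Real.cos_zero, ← sub_pos] at hcos

lemma integrableOn_Ioi_min_sq_mul_rpow (a : ℝ) {α : ℝ} (hα : 0 < α) (hα2 : α < 2) :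
    IntegrableOn (fun t : ℝ ↦ min 2 ((a * t) ^ 2 / 2) * t ^ (-1 - α)) (Ioi 0) := by
  have hmeas : Measurable fun t : ℝ ↦ min 2 ((a * t) ^ 2 / 2) * t ^ (-1 - α) := by fun_prop
  rw [← Ioc_union_Ioi_eq_Ioi (zero_le_one (α := ℝ))]
  refine IntegrableOn.union ?_ ?_
  · have hint : IntegrableOn (fun t : ℝ ↦ a ^ 2 / 2 * t ^ (1 - α)) (Ioc 0 1) :=
      ((intervalIntegrable_iff_integrableOn_Ioc_of_le zero_le_one).1
        (intervalIntegral.intervalIntegrable_rpow' (by linarith))).const_mul _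
    refine hint.mono' hmeas.aestronglyMeasurable
      ((ae_restrict_iff' measurableSet_Ioc).2 (.of_forall fun t ⟨ht, _⟩ ↦ ?_))
    have hpow : t ^ (1 - α) = t ^ 2 * t ^ (-1 - α) := by
      rw [← Real.rpow_two, ← Real.rpow_add ht]
      ring_nf
    calc ‖min 2 ((a * t) ^ 2 / 2) * t ^ (-1 - α)‖
        = min 2 ((a * t) ^ 2 / 2) * t ^ (-1 - α) := Real.norm_of_nonneg (by positivity)
      _ ≤ (a * t) ^ 2 / 2 * t ^ (-1 - α) := by gcongr; exact min_le_right _ _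
      _ = a ^ 2 / 2 * t ^ (1 - α) := by rw [hpow]; ring
  · have hint : IntegrableOn (fun t : ℝ ↦ 2 * t ^ (-1 - α)) (Ioi 1) :=
      (integrableOn_Ioi_rpow_of_lt (by linarith) one_pos).const_mul 2
    refine hint.mono' hmeas.aestronglyMeasurable
      ((ae_restrict_iff' measurableSet_Ioi).2 (.of_forall fun t ht ↦ ?_))
    have ht0 : 0 < t := one_pos.trans ht
    calc ‖min 2 ((a * t) ^ 2 / 2) * t ^ (-1 - α)‖
        = min 2 ((a * t) ^ 2 / 2) * t ^ (-1 - α) := Real.norm_of_nonneg (by positivity)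
      _ ≤ 2 * t ^ (-1 - α) := by gcongr; exact min_le_left _ _

lemma min_mul_one_add_le_one_add {x y b m : ℝ} (hx : 0 ≤ x) (hy : 0 ≤ y) (hb : 0 ≤ b)
    (h : x ≤ b ∨ m * x ≤ y) : min (1 / (1 + b)) m * (1 + x) ≤ 1 + y := by
  rcases h with hxb | hmx
  · calc min (1 / (1 + b)) m * (1 + x) ≤ 1 / (1 + b) * (1 + b) := by
          gcongr
          exact min_le_left _ _
      _ = 1 := by field_simp
      _ ≤ 1 + y := by linarith
  · have hone : min (1 / (1 + b)) m ≤ 1 :=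
      (min_le_left _ _).trans (div_le_one_of_le₀ (by linarith) (by linarith))
    have hm : min (1 / (1 + b)) m * x ≤ m * x := by
      gcongr
      exact min_le_right _ _
    linarith

lemma one_add_le_max_mul_one_add {x y M : ℝ} (hx : 0 ≤ x) (h : y ≤ M * x) :
    1 + y ≤ max 1 M * (1 + x) := by
  have hM : M * x ≤ max 1 M * x := by
    gcongr
    exact le_max_right _ _
  linarith [le_max_left 1 M]

section InnerProductSpace

variable {E : Type*} [NormedAddCommGroup E] [InnerProductSpace ℝ E]

/-- The integrand `(1 - cos ⟪ξ, y⟫) ‖y‖ ^ (-d - α)`, with `d = dim E`, in the Lévy–Khintchine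
formula for the isotropic `α`-stable process, without its normalising constant. -/
noncomputable def levyIntegrand (α : ℝ) (ξ y : E) : ℝ :=
  (1 - Real.cos (inner ℝ ξ y)) * ‖y‖ ^ (-(finrank ℝ E : ℝ) - α)

/-- A radial function of `y` dominating `levyIntegrand α ξ y` for every frequency `ξ` of norm
`a`. -/
noncomputable def levyMajorant (α a : ℝ) (y : E) : ℝ :=
  min 2 ((a * ‖y‖) ^ 2 / 2) * ‖y‖ ^ (-(finrank ℝ E : ℝ) - α)

lemma levyIntegrand_nonneg (α : ℝ) (ξ y : E) : 0 ≤ levyIntegrand α ξ y :=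
  mul_nonneg (sub_nonneg.2 (Real.cos_le_one _)) (by positivity)

@[simp]
lemma levyIntegrand_zero_left (α : ℝ) (y : E) : levyIntegrand α 0 y = 0 := by
  simp [levyIntegrand]

lemma levyIntegrand_le_levyMajorant (α : ℝ) (ξ y : E) :
    levyIntegrand α ξ y ≤ levyMajorant α ‖ξ‖ y := by
  have hinner : inner ℝ ξ y ^ 2 ≤ (‖ξ‖ * ‖y‖) ^ 2 :=
    sq_le_sq.2 ((abs_real_inner_le_norm ξ y).trans (le_abs_self _))
  unfold levyIntegrand levyMajorant
  gcongr
  exact (one_sub_cos_le_min _).trans (by gcongr)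

lemma levyIntegrand_smul_left {r : ℝ} (hr : 0 < r) (α : ℝ) (ξ y : E) :
    levyIntegrand α (r • ξ) y = r ^ (finrank ℝ E + α) * levyIntegrand α ξ (r • y) := by
  have hpow : r ^ (finrank ℝ E + α) * r ^ (-(finrank ℝ E : ℝ) - α) = 1 := by
    rw [← neg_add', Real.rpow_neg hr.le, mul_inv_cancel₀ (by positivity)]
  rw [levyIntegrand, levyIntegrand, real_inner_smul_left, real_inner_smul_right,
    norm_smul_of_nonneg hr.le, Real.mul_rpow hr.le (norm_nonneg y)]
  linear_combination
    -((1 - Real.cos (r * inner ℝ ξ y)) * ‖y‖ ^ (-(finrank ℝ E : ℝ) - α)) * hpow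

lemma ball_smul_subset_unit_ball {u : E} (hu : ‖u‖ = 1) :
    ball ((3 / 4 : ℝ) • u) (1 / 4) ⊆ ball 0 1 :=
  ball_subset_ball' (by rw [dist_zero_right, norm_smul, hu]; norm_num)

lemma half_le_inner_of_mem_ball {u y : E} (hu : ‖u‖ = 1)
    (hy : y ∈ ball ((3 / 4 : ℝ) • u) (1 / 4)) : 1 / 2 ≤ inner ℝ u y := by
  have hsplit : inner ℝ u y = 3 / 4 + inner ℝ u (y - (3 / 4 : ℝ) • u) := by
    rw [inner_sub_right, real_inner_smul_right, real_inner_self_eq_norm_sq, hu]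
    ring
  have hdev : |inner ℝ u (y - (3 / 4 : ℝ) • u)| ≤ 1 / 4 :=
    calc |inner ℝ u (y - (3 / 4 : ℝ) • u)| ≤ ‖u‖ * ‖y - (3 / 4 : ℝ) • u‖ :=
          abs_real_inner_le_norm _ _
      _ ≤ 1 / 4 := by
          rw [hu, one_mul]
          exact (mem_ball_iff_norm.1 hy).le
  linarith [neg_le_of_abs_le hdev]

lemma one_sub_cos_half_le_levyIntegrand {α : ℝ} (hα : 0 ≤ α) {u y : E} (hu : ‖u‖ = 1)
    (hy : y ∈ ball ((3 / 4 : ℝ) • u) (1 / 4)) : 1 - Real.cos (1 / 2) ≤ levyIntegrand α u y := by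
  have hhalf : 1 / 2 ≤ inner ℝ u y := half_le_inner_of_mem_ball hu hy
  have hy1 : ‖y‖ ≤ 1 := (mem_ball_zero_iff.1 (ball_smul_subset_unit_ball hu hy)).le
  have hinner : inner ℝ u y ≤ ‖y‖ := by simpa [hu] using real_inner_le_norm u y
  have hcos : Real.cos (inner ℝ u y) ≤ Real.cos (1 / 2) :=
    Real.cos_le_cos_of_nonneg_of_le_pi (by norm_num) (by linarith [Real.pi_gt_three]) hhalf
  have hpow : 1 ≤ ‖y‖ ^ (-(finrank ℝ E : ℝ) - α) :=
    Real.one_le_rpow_of_pos_of_le_one_of_nonpos (by linarith) hy1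
      (by linarith [(finrank ℝ E).cast_nonneg (α := ℝ)])
  calc 1 - Real.cos (1 / 2) ≤ 1 - Real.cos (inner ℝ u y) := by linarith
    _ ≤ levyIntegrand α u y :=
        le_mul_of_one_le_right (sub_nonneg.2 (Real.cos_le_one _)) hpow

variable [MeasurableSpace E] (μ : Measure E)

/-- The characteristic exponent at `ξ` of the isotropic `α`-stable process with jumps truncated at
size `R`, without its normalising constant. -/
noncomputable def truncatedExponent (α R : ℝ) (ξ : E) : ℝ :=
  ∫ y in ball 0 R, levyIntegrand α ξ y ∂μ

lemma truncatedExponent_nonneg (α R : ℝ) (ξ : E) : 0 ≤ truncatedExponent μ α R ξ :=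
  integral_nonneg fun y ↦ levyIntegrand_nonneg α ξ y

variable [FiniteDimensional ℝ E] [BorelSpace E] [μ.IsAddHaarMeasure]

lemma integrable_levyMajorant [Nontrivial E] (a : ℝ) {α : ℝ} (hα : 0 < α) (hα2 : α < 2) :
    Integrable (levyMajorant α a : E → ℝ) μ := by
  refine (integrable_fun_norm_addHaar μ
    (f := fun t ↦ min 2 ((a * t) ^ 2 / 2) * t ^ (-(finrank ℝ E : ℝ) - α))).2
    ((integrableOn_Ioi_min_sq_mul_rpow a hα hα2).congr_fun (fun t ht ↦ ?_) measurableSet_Ioi)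
  have hpow : t ^ (-1 - α) = t ^ (finrank ℝ E - 1) * t ^ (-(finrank ℝ E : ℝ) - α) := by
    rw [← Real.rpow_natCast, ← Real.rpow_add ht, Nat.cast_pred finrank_pos]
    ring_nf
  simp only [hpow, smul_eq_mul]
  ring

lemma integrable_levyIntegrand {α : ℝ} (hα : 0 < α) (hα2 : α < 2) (ξ : E) :
    Integrable (levyIntegrand α ξ) μ := by
  rcases eq_or_ne ξ 0 with rfl | hξ
  · simp [funext (levyIntegrand_zero_left α)]
  · have : Nontrivial E := nontrivial_of_ne ξ 0 hξ
    have hmeas : Measurable (levyIntegrand α ξ) := by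
      unfold levyIntegrand
      fun_prop
    refine (integrable_levyMajorant μ ‖ξ‖ hα hα2).mono' hmeas.aestronglyMeasurable
      (.of_forall fun y ↦ ?_)
    rw [Real.norm_of_nonneg (levyIntegrand_nonneg α ξ y)]
    exact levyIntegrand_le_levyMajorant α ξ y

lemma truncatedExponent_smul {r : ℝ} (hr : 0 < r) (α R : ℝ) (ξ : E) :
    truncatedExponent μ α R (r • ξ) = r ^ α * truncatedExponent μ α (r * R) ξ := by
  have hball : r • ball (0 : E) R = ball 0 (r * R) := by
    rw [_root_.smul_ball hr.ne', smul_zero, Real.norm_of_nonneg hr.le]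
  simp only [truncatedExponent, levyIntegrand_smul_left hr]
  rw [integral_const_mul, Measure.setIntegral_comp_smul_of_pos μ _ _ hr, hball, smul_eq_mul,
    Real.rpow_add hr, Real.rpow_natCast]
  field_simp

lemma truncatedExponent_eq_norm_rpow_mul {ξ : E} (hξ : ξ ≠ 0) (α R : ℝ) :
    truncatedExponent μ α R ξ =
      ‖ξ‖ ^ α * truncatedExponent μ α (‖ξ‖ * R) (‖ξ‖⁻¹ • ξ) := by
  have hnorm : 0 < ‖ξ‖ := norm_pos_iff.2 hξ
  rw [← truncatedExponent_smul μ hnorm, smul_inv_smul₀ hnorm.ne']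

lemma truncatedExponent_le_integral_levyMajorant {α : ℝ} (hα : 0 < α) (hα2 : α < 2) (R : ℝ)
    {ξ : E} (hξ : ξ ≠ 0) :
    truncatedExponent μ α R ξ ≤ ∫ y, levyMajorant α ‖ξ‖ (y : E) ∂μ := by
  have : Nontrivial E := nontrivial_of_ne ξ 0 hξ
  have hint : Integrable (levyIntegrand α ξ) μ := integrable_levyIntegrand μ hα hα2 ξ
  calc truncatedExponent μ α R ξ ≤ ∫ y, levyIntegrand α ξ y ∂μ :=
        setIntegral_le_integral hint (.of_forall (levyIntegrand_nonneg α ξ))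
    _ ≤ ∫ y, levyMajorant α ‖ξ‖ y ∂μ :=
        integral_mono hint (integrable_levyMajorant μ ‖ξ‖ hα hα2)
          (levyIntegrand_le_levyMajorant α ξ)

lemma truncatedExponent_le_mul_norm_rpow {α : ℝ} (hα : 0 < α) (hα2 : α < 2) (R : ℝ) (ξ : E) :
    truncatedExponent μ α R ξ ≤ (∫ y, levyMajorant α 1 (y : E) ∂μ) * ‖ξ‖ ^ α := by
  rcases eq_or_ne ξ 0 with rfl | hξ
  · simp [truncatedExponent, Real.zero_rpow hα.ne']
  · have hu : ‖‖ξ‖⁻¹ • ξ‖ = 1 := norm_smul_inv_norm (𝕜 := ℝ) hξ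
    rw [truncatedExponent_eq_norm_rpow_mul μ hξ, mul_comm, ← hu]
    gcongr
    exact truncatedExponent_le_integral_levyMajorant μ hα hα2 _
      (ne_zero_of_norm_ne_zero (hu ▸ one_ne_zero))

lemma le_truncatedExponent_of_norm_eq_one {α R : ℝ} (hα : 0 < α) (hα2 : α < 2) (hR : 1 ≤ R)
    {u : E} (hu : ‖u‖ = 1) :
    (1 - Real.cos (1 / 2)) * μ.real (ball (0 : E) (1 / 4)) ≤ truncatedExponent μ α R u := by
  have hint : Integrable (levyIntegrand α u) μ := integrable_levyIntegrand μ hα hα2 u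
  calc (1 - Real.cos (1 / 2)) * μ.real (ball (0 : E) (1 / 4))
      = (1 - Real.cos (1 / 2)) * μ.real (ball ((3 / 4 : ℝ) • u) (1 / 4)) := by
        rw [Measure.addHaar_real_ball_center μ ((3 / 4 : ℝ) • u)]
    _ ≤ ∫ y in ball ((3 / 4 : ℝ) • u) (1 / 4), levyIntegrand α u y ∂μ :=
        setIntegral_ge_of_const_le_real measurableSet_ball measure_ball_lt_top.ne
          (fun _ ↦ one_sub_cos_half_le_levyIntegrand hα.le hu) hint.integrableOn
    _ ≤ truncatedExponent μ α R u :=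
        setIntegral_mono_set hint.integrableOn (.of_forall (levyIntegrand_nonneg α u))
          ((ball_smul_subset_unit_ball hu).trans (ball_subset_ball hR)).eventuallyLE

lemma mul_norm_rpow_le_truncatedExponent {α R : ℝ} (hα : 0 < α) (hα2 : α < 2) {ξ : E}
    (hξ : 1 ≤ ‖ξ‖ * R) :
    (1 - Real.cos (1 / 2)) * μ.real (ball (0 : E) (1 / 4)) * ‖ξ‖ ^ α ≤
      truncatedExponent μ α R ξ := by
  have hξ0 : ξ ≠ 0 := by
    rintro rfl
    norm_num at hξ
  rw [truncatedExponent_eq_norm_rpow_mul μ hξ0, mul_comm]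
  gcongr
  exact le_truncatedExponent_of_norm_eq_one μ hα hα2 hξ (norm_smul_inv_norm (𝕜 := ℝ) hξ0)

theorem statement5_general {α R A : ℝ} (hα : 0 < α) (hα2 : α < 2) (hR : 0 < R) (hA : 0 < A) :
    ∃ c₁ c₂ : ℝ, 0 < c₁ ∧ 0 < c₂ ∧
      ∀ ξ : E,
        c₁ * (1 + ‖ξ‖ ^ α) ≤ 1 + A * truncatedExponent μ α R ξ ∧
        1 + A * truncatedExponent μ α R ξ ≤ c₂ * (1 + ‖ξ‖ ^ α) := by
  set m := (1 - Real.cos (1 / 2)) * μ.real (ball (0 : E) (1 / 4))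
  set M := ∫ y, levyMajorant α 1 (y : E) ∂μ
  have hm : 0 < m := mul_pos one_sub_cos_half_pos
    (ENNReal.toReal_pos (measure_ball_pos μ 0 (by norm_num)).ne' measure_ball_lt_top.ne)
  refine ⟨min (1 / (1 + R⁻¹ ^ α)) (A * m), max 1 (A * M), by positivity, by positivity,
    fun ξ ↦ ⟨min_mul_one_add_le_one_add (by positivity)
      (mul_nonneg hA.le (truncatedExponent_nonneg μ α R ξ)) (by positivity) ?_,
      one_add_le_max_mul_one_add (by positivity) ?_⟩⟩
  · rcases le_total ‖ξ‖ R⁻¹ with hle | hge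
    · exact .inl (by gcongr)
    · refine .inr ?_
      rw [mul_assoc]
      gcongr
      exact mul_norm_rpow_le_truncatedExponent μ hα hα2 ((inv_le_iff_one_le_mul₀ hR).1 hge)
  · rw [mul_assoc]
    gcongr
    exact truncatedExponent_le_mul_norm_rpow μ hα hα2 R ξ

end InnerProductSpace

lemma stableA_pos (d : ℕ) {α : ℝ} (hα : 0 < α) (hα2 : α < 2) : 0 < stableA d α := by
  have hden : 0 < Real.Gamma (1 - α / 2) := Real.Gamma_pos_of_pos (by linarith)
  unfold stableA
  positivity

lemma truncPsi_eq_stableA_mul_truncatedExponent (d : ℕ) (α : ℝ) (ξ : EuclideanSpace ℝ (Fin d)) :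
    truncPsi d α ξ = stableA d α * truncatedExponent volume α 1 ξ := by
  simp only [truncPsi, truncatedExponent, levyIntegrand, finrank_euclideanSpace_fin]

/-- `1 + ψ(ξ)` is comparable to `1 + |ξ|^α` on all of `ℝ^d`, with
constants depending only on `d` and `α`. -/
theorem statement5 (d : ℕ) (hd : 2 ≤ d) (α : ℝ) (hα : 0 < α) (hα2 : α < 2) :
    ∃ c₁ c₂ : ℝ, 0 < c₁ ∧ 0 < c₂ ∧
      ∀ ξ : EuclideanSpace ℝ (Fin d),
        c₁ * (1 + ‖ξ‖ ^ α) ≤ 1 + truncPsi d α ξ ∧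
        1 + truncPsi d α ξ ≤ c₂ * (1 + ‖ξ‖ ^ α) := by
  simpa only [truncPsi_eq_stableA_mul_truncatedExponent] using
    statement5_general volume hα hα2 one_pos (stableA_pos d hα hα2)
end
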